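/- arXiv:1111.2440 — 2 statements merged into one kernel-verified Lean document; each statement's English description precedes it below -/
import Mathlib

section
/- Let (Ω, μ) be a measure space such that there exists an integrable function b : Ω → ℂ that is not essentially bounded (i.e. L¹(Ω,μ) ⊄ L^∞(Ω,μ)), and let H be a nontrivial complex Hilbert space. If there exists a continuous frame F : Ω → H with respect to (Ω, μ), then there exists a continuous frame F' : Ω → H that is not essentially norm bounded, i.e., for every M > 0 the set {ω ∈ Ω : ‖F'(ω)‖ > M} has positive μ-measure. -/
/-!
If `F` is not already essentially norm unbounded, perturb it by the rank-one map `ω ↦ g ω • e`,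
where `g` is a square-integrable, essentially unbounded function (a power of `‖b‖`) and `e ≠ 0` is
a vector so short that the perturbation has Bessel bound smaller than `A`. By the triangle
inequality in `L²(μ)` the sum `F'` is still a frame, and it cannot be essentially bounded, since
otherwise the difference `F' - F` would be.
-/

open MeasureTheory

local notation "⟪" x ", " y "⟫" => @inner ℂ _ _ x y

open scoped ENNReal Topology

section Lp

variable {Ω E : Type*} [MeasurableSpace Ω] {μ : Measure Ω} [NormedAddCommGroup E]

theorem lintegral_enorm_sq_eq_eLpNorm_sq {ε : Type*} [ENorm ε] (u : Ω → ε) :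
    ∫⁻ ω, ‖u ω‖ₑ ^ 2 ∂μ = eLpNorm u 2 μ ^ 2 := by
  simpa using (eLpNorm_nnreal_pow_eq_lintegral (f := u) (μ := μ) (p := 2) two_ne_zero).symm

-- For `a < 0` both sides are `0`.
theorem ofReal_mul_sq_eq_ofReal_sqrt_mul_sq (a : ℝ) {t : ℝ} (ht : 0 ≤ t) :
    ENNReal.ofReal (a * t ^ 2) = ENNReal.ofReal (√a * t) ^ 2 := by
  rw [← ENNReal.ofReal_pow (by positivity), mul_pow, Real.sq_sqrt',
    ENNReal.ofReal_mul' (by positivity), ENNReal.ofReal_mul' (by positivity), ENNReal.ofReal_max,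
    ENNReal.ofReal_zero, max_eq_left zero_le]

theorem lintegral_enorm_sq_le_ofReal_mul_sq_iff {ε : Type*} [ENorm ε] {u : Ω → ε}
    {a t : ℝ} (ht : 0 ≤ t) :
    ∫⁻ ω, ‖u ω‖ₑ ^ 2 ∂μ ≤ ENNReal.ofReal (a * t ^ 2) ↔
      eLpNorm u 2 μ ≤ ENNReal.ofReal (√a * t) := by
  rw [lintegral_enorm_sq_eq_eLpNorm_sq, ofReal_mul_sq_eq_ofReal_sqrt_mul_sq a ht,
    (ENNReal.pow_right_strictMono two_ne_zero).le_iff_le]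

theorem ofReal_mul_sq_le_lintegral_enorm_sq_iff {ε : Type*} [ENorm ε] {u : Ω → ε}
    {a t : ℝ} (ht : 0 ≤ t) :
    ENNReal.ofReal (a * t ^ 2) ≤ ∫⁻ ω, ‖u ω‖ₑ ^ 2 ∂μ ↔
      ENNReal.ofReal (√a * t) ≤ eLpNorm u 2 μ := by
  rw [lintegral_enorm_sq_eq_eLpNorm_sq, ofReal_mul_sq_eq_ofReal_sqrt_mul_sq a ht,
    (ENNReal.pow_right_strictMono two_ne_zero).le_iff_le]

theorem eLpNorm_smul_const {𝕜 : Type*} [NormedField 𝕜] [NormedSpace 𝕜 E] (g : Ω → 𝕜) (e : E)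
    (p : ℝ≥0∞) : eLpNorm (fun ω => g ω • e) p μ = eLpNorm g p μ * ‖e‖ₑ :=
  calc eLpNorm (fun ω => g ω • e) p μ
      = eLpNorm (‖e‖ • fun ω => ‖g ω‖) p μ :=
        eLpNorm_congr_norm_ae <| .of_forall fun ω => by simp [norm_smul, mul_comm]
    _ = eLpNorm g p μ * ‖e‖ₑ := by
        rw [eLpNorm_const_smul, eLpNorm_norm, enorm_norm, mul_comm]

theorem eLpNormEssSup_eq_top_iff {u : Ω → E} :
    eLpNormEssSup u μ = ∞ ↔ ∀ C : ℝ, 0 < μ {ω | C < ‖u ω‖} := by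
  refine ⟨fun hu C => pos_iff_ne_zero.2 fun hC => ?_, fun hu => ?_⟩
  · have hle : ∀ᵐ ω ∂μ, ‖u ω‖ ≤ C := by simpa [ae_iff] using hC
    exact (eLpNormEssSup_lt_top_of_ae_bound hle).ne hu
  · by_contra hfin
    refine (hu (eLpNormEssSup u μ).toReal).ne' (measure_mono_null (fun ω hω => ?_)
      (meas_eLpNormEssSup_lt (f := u)))
    simpa [← ofReal_norm, ENNReal.lt_ofReal_iff_toReal_lt hfin] using hω

theorem eLpNormEssSup_eq_top_or_add_eq_top {u v : Ω → E} (hv : eLpNormEssSup v μ = ∞) :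
    eLpNormEssSup u μ = ∞ ∨ eLpNormEssSup (u + v) μ = ∞ := by
  have hle : eLpNormEssSup v μ ≤ eLpNormEssSup (u + v) μ + eLpNormEssSup u μ := by
    simpa [← eLpNorm_exponent_top] using eLpNormEssSup_add_le (f := u + v) (g := -u) (μ := μ)
  rw [hv, top_le_iff, ENNReal.add_eq_top] at hle
  exact hle.symm

theorem exists_measurable_memLp_eLpNormEssSup_eq_top (𝕜 : Type*) [RCLike 𝕜] {b : Ω → E}
    {p q : ℝ≥0∞} (hp : p ≠ 0) (hq : q ≠ 0) (hq_top : q ≠ ∞) (hb : MemLp b p μ)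
    (hb_top : eLpNormEssSup b μ = ∞) :
    ∃ g : Ω → 𝕜, Measurable g ∧ MemLp g q μ ∧ eLpNormEssSup g μ = ∞ := by
  have hp_top : p ≠ ∞ := by
    rintro rfl
    exact hb.2.ne hb_top
  set h : Ω → E := hb.1.mk b
  have hr : 0 < (p / q).toReal :=
    ENNReal.toReal_pos (ENNReal.div_pos hp hq_top).ne' (ENNReal.div_ne_top hp_top hq)
  have h_memLp : MemLp (fun ω => ‖h ω‖ ^ (p / q).toReal) q μ := by
    simpa [ENNReal.div_div_cancel hp hp_top] using
      ((memLp_congr_ae hb.1.ae_eq_mk).1 hb).norm_rpow_div (p / q)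
  have h_top : eLpNormEssSup (fun ω => ‖h ω‖ ^ (p / q).toReal) μ = ∞ := by
    rw [← eLpNorm_exponent_top, eLpNorm_norm_rpow h hr, ENNReal.top_mul (by simpa using hr),
      ← eLpNorm_congr_ae hb.1.ae_eq_mk, eLpNorm_exponent_top, hb_top, ENNReal.top_rpow_of_pos hr]
  refine ⟨fun ω => ((‖h ω‖ ^ (p / q).toReal : ℝ) : 𝕜), ?_, h_memLp.ofReal, ?_⟩
  · have : StronglyMeasurable h := hb.1.stronglyMeasurable_mk
    exact RCLike.measurable_ofReal.comp (this.norm.measurable.pow_const _)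
  · rw [← h_top]
    simp only [← eLpNorm_exponent_top]
    exact eLpNorm_congr_norm_ae <| .of_forall fun ω => RCLike.norm_ofReal _

end Lp

theorem exists_ne_zero_mul_norm_lt (𝕜 E : Type*) [NontriviallyNormedField 𝕜]
    [NormedAddCommGroup E] [NormedSpace 𝕜 E] [Nontrivial E] (c : ℝ) {ε : ℝ} (hε : 0 < ε) :
    ∃ e : E, e ≠ 0 ∧ c * ‖e‖ < ε := by
  have hsmall : ∀ᶠ e : E in 𝓝 0, c * ‖e‖ < ε :=
    (by fun_prop : Continuous fun e : E => c * ‖e‖).continuousAt.eventually_lt_const (by simpa)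
  have := Module.punctured_nhds_neBot 𝕜 E 0
  obtain ⟨e, he, he0⟩ :=
    ((hsmall.filter_mono nhdsWithin_le_nhds).and (self_mem_nhdsWithin (s := {0}ᶜ))).exists
  exact ⟨e, he0, he⟩

section Frames

variable {Ω 𝕜 H : Type*} [MeasurableSpace Ω] [RCLike 𝕜] {μ : Measure Ω}
  [NormedAddCommGroup H] [InnerProductSpace 𝕜 H] {F G : Ω → H} {A B C : ℝ}

variable (𝕜 μ) in
/-- A Bessel mapping with bound `B`: a weakly measurable map satisfying the upper frame inequality.
As `inner` is conjugate-linear in its first argument, the paper's `⟨f, F ω⟩` is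
`inner 𝕜 (F ω) f`. -/
structure IsBesselMap (F : Ω → H) (B : ℝ) : Prop where
  measurable_inner : ∀ f : H, Measurable fun ω => inner 𝕜 (F ω) f
  upper_bound : ∀ f : H, ∫⁻ ω, ‖inner 𝕜 (F ω) f‖ₑ ^ 2 ∂μ ≤ ENNReal.ofReal (B * ‖f‖ ^ 2)

variable (𝕜 μ) in
/-- A continuous frame with bounds `A` and `B`, that is, a Bessel mapping which also satisfies the
lower frame inequality. The condition `A ≤ B` is not recorded. -/
structure IsContinuousFrame (F : Ω → H) (A B : ℝ) : Prop extends IsBesselMap 𝕜 μ F B where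
  lower_bound_pos : 0 < A
  lower_bound : ∀ f : H, ENNReal.ofReal (A * ‖f‖ ^ 2) ≤ ∫⁻ ω, ‖inner 𝕜 (F ω) f‖ₑ ^ 2 ∂μ

theorem IsBesselMap.eLpNorm_inner_le (hF : IsBesselMap 𝕜 μ F B) (f : H) :
    eLpNorm (fun ω => inner 𝕜 (F ω) f) 2 μ ≤ ENNReal.ofReal (√B * ‖f‖) :=
  (lintegral_enorm_sq_le_ofReal_mul_sq_iff (norm_nonneg f)).1 (hF.upper_bound f)

theorem IsBesselMap.aestronglyMeasurable_inner (hF : IsBesselMap 𝕜 μ F B) (f : H) :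
    AEStronglyMeasurable (fun ω => inner 𝕜 (F ω) f) μ :=
  (hF.measurable_inner f).aestronglyMeasurable

theorem IsContinuousFrame.le_eLpNorm_inner (hF : IsContinuousFrame 𝕜 μ F A B) (f : H) :
    ENNReal.ofReal (√A * ‖f‖) ≤ eLpNorm (fun ω => inner 𝕜 (F ω) f) 2 μ :=
  (ofReal_mul_sq_le_lintegral_enorm_sq_iff (norm_nonneg f)).1 (hF.lower_bound f)

theorem IsBesselMap.add (hF : IsBesselMap 𝕜 μ F B) (hG : IsBesselMap 𝕜 μ G C) :
    IsBesselMap 𝕜 μ (F + G) ((√B + √C) ^ 2) where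
  measurable_inner f := by
    simp only [Pi.add_apply, inner_add_left]
    exact (hF.measurable_inner f).add (hG.measurable_inner f)
  upper_bound f := by
    rw [lintegral_enorm_sq_le_ofReal_mul_sq_iff (norm_nonneg f), Real.sqrt_sq (by positivity)]
    simp only [Pi.add_apply, inner_add_left]
    calc eLpNorm (fun ω => inner 𝕜 (F ω) f + inner 𝕜 (G ω) f) 2 μ
        ≤ eLpNorm (fun ω => inner 𝕜 (F ω) f) 2 μ + eLpNorm (fun ω => inner 𝕜 (G ω) f) 2 μ :=
          eLpNorm_add_le (hF.aestronglyMeasurable_inner f) (hG.aestronglyMeasurable_inner f)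
            one_le_two
      _ ≤ ENNReal.ofReal (√B * ‖f‖) + ENNReal.ofReal (√C * ‖f‖) :=
          add_le_add (hF.eLpNorm_inner_le f) (hG.eLpNorm_inner_le f)
      _ = ENNReal.ofReal ((√B + √C) * ‖f‖) := by
          rw [add_mul, ENNReal.ofReal_add (by positivity) (by positivity)]

theorem IsContinuousFrame.add_isBesselMap (hF : IsContinuousFrame 𝕜 μ F A B)
    (hG : IsBesselMap 𝕜 μ G C) (hCA : C < A) :
    IsContinuousFrame 𝕜 μ (F + G) ((√A - √C) ^ 2) ((√B + √C) ^ 2) where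
  toIsBesselMap := hF.toIsBesselMap.add hG
  lower_bound_pos :=
    pow_pos (sub_pos.2 ((Real.sqrt_lt_sqrt_iff_of_pos hF.lower_bound_pos).2 hCA)) 2
  lower_bound f := by
    have hsqrt : √C ≤ √A := Real.sqrt_le_sqrt hCA.le
    have hFG := (hF.toIsBesselMap.add hG).aestronglyMeasurable_inner f
    rw [ofReal_mul_sq_le_lintegral_enorm_sq_iff (norm_nonneg f),
      Real.sqrt_sq (sub_nonneg.2 hsqrt), sub_mul, ENNReal.ofReal_sub _ (by positivity),
      tsub_le_iff_right]
    calc ENNReal.ofReal (√A * ‖f‖)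
        ≤ eLpNorm (fun ω => inner 𝕜 (F ω) f) 2 μ := hF.le_eLpNorm_inner f
      _ = eLpNorm ((fun ω => inner 𝕜 ((F + G) ω) f) - fun ω => inner 𝕜 (G ω) f) 2 μ := by
          congr 1
          ext ω
          simp [inner_add_left]
      _ ≤ eLpNorm (fun ω => inner 𝕜 ((F + G) ω) f) 2 μ + eLpNorm (fun ω => inner 𝕜 (G ω) f) 2 μ :=
          eLpNorm_sub_le hFG (hG.aestronglyMeasurable_inner f) one_le_two
      _ ≤ eLpNorm (fun ω => inner 𝕜 ((F + G) ω) f) 2 μ + ENNReal.ofReal (√C * ‖f‖) := by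
          gcongr
          exact hG.eLpNorm_inner_le f

theorem IsBesselMap.smul_const {g : Ω → 𝕜} (hg : Measurable g) (hg_memLp : MemLp g 2 μ) (e : H) :
    IsBesselMap 𝕜 μ (fun ω => g ω • e) (((eLpNorm g 2 μ).toReal * ‖e‖) ^ 2) where
  measurable_inner f := by
    simp only [inner_smul_left]
    exact (RCLike.continuous_conj.measurable.comp hg).mul_const _
  upper_bound f := by
    rw [lintegral_enorm_sq_le_ofReal_mul_sq_iff (norm_nonneg f), Real.sqrt_sq (by positivity)]
    calc eLpNorm (fun ω => inner 𝕜 (g ω • e) f) 2 μ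
        = eLpNorm (star g) 2 μ * ‖inner 𝕜 e f‖ₑ := by
          rw [← eLpNorm_smul_const]
          simp [inner_smul_left]
      _ ≤ eLpNorm g 2 μ * ENNReal.ofReal (‖e‖ * ‖f‖) := by
          rw [eLpNorm_star, ← ofReal_norm]
          gcongr
          exact norm_inner_le_norm e f
      _ = ENNReal.ofReal ((eLpNorm g 2 μ).toReal * ‖e‖ * ‖f‖) := by
          rw [mul_assoc, ENNReal.ofReal_mul ENNReal.toReal_nonneg,
            ENNReal.ofReal_toReal hg_memLp.2.ne]

end Frames

theorem exists_norm_unbounded_continuous_frame_general {Ω E H 𝕜 : Type*} [MeasurableSpace Ω]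
    {μ : Measure Ω} [NormedAddCommGroup E] [RCLike 𝕜] [NormedAddCommGroup H]
    [InnerProductSpace 𝕜 H] [Nontrivial H] {b : Ω → E} {p : ℝ≥0∞} (hp : p ≠ 0)
    (hb : MemLp b p μ) (hb_top : eLpNormEssSup b μ = ∞) {F : Ω → H} {A B : ℝ}
    (hF : IsContinuousFrame 𝕜 μ F A B) :
    ∃ (F' : Ω → H) (A' B' : ℝ), IsContinuousFrame 𝕜 μ F' A' B' ∧ eLpNormEssSup F' μ = ∞ := by
  obtain ⟨g, hg, hg_memLp, hg_top⟩ := exists_measurable_memLp_eLpNormEssSup_eq_top 𝕜 hp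
    two_ne_zero ENNReal.ofNat_ne_top hb hb_top
  obtain ⟨e, he, heA⟩ :=
    exists_ne_zero_mul_norm_lt 𝕜 H (eLpNorm g 2 μ).toReal (Real.sqrt_pos.2 hF.lower_bound_pos)
  have hG_top : eLpNormEssSup (fun ω => g ω • e) μ = ∞ := by
    rw [← eLpNorm_exponent_top, eLpNorm_smul_const, eLpNorm_exponent_top, hg_top,
      ENNReal.top_mul (enorm_ne_zero.2 he)]
  rcases eLpNormEssSup_eq_top_or_add_eq_top (u := F) hG_top with hF_top | hF'_top
  · exact ⟨F, A, B, hF, hF_top⟩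
  · have hbound : ((eLpNorm g 2 μ).toReal * ‖e‖) ^ 2 < A := (Real.lt_sqrt (by positivity)).1 heA
    exact ⟨_, _, _, hF.add_isBesselMap (.smul_const hg hg_memLp e) hbound, hF'_top⟩

/-- If `(Ω, μ)` admits an integrable function `b` that is not essentially bounded
(i.e. `L¹(Ω,μ) ⊄ L^∞(Ω,μ)`), `H` is a nontrivial complex Hilbert space, and there exists a
continuous frame `F : Ω → H` with respect to `(Ω, μ)`, then there exists a continuous frame
`F' : Ω → H` that is not essentially norm bounded: for every `M > 0` the set
`{ω : ‖F'(ω)‖ > M}` has positive measure. -/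
theorem exists_norm_unbounded_continuous_frame
    {Ω : Type} [MeasurableSpace Ω] (μ : Measure Ω)
    {H : Type} [NormedAddCommGroup H] [InnerProductSpace ℂ H] [CompleteSpace H]
    [Nontrivial H]
    (b : Ω → ℂ) (hb_int : Integrable b μ)
    (hb_unbdd : ∀ C : ℝ, 0 < μ {ω | C < ‖b ω‖})
    (F : Ω → H)
    (hF_meas : ∀ f : H, Measurable fun ω => ⟪F ω, f⟫)
    (A B : ℝ) (hA : 0 < A)
    (hF_lower : ∀ f : H,
      ENNReal.ofReal (A * ‖f‖ ^ 2) ≤ ∫⁻ ω, (‖⟪F ω, f⟫‖₊ : ENNReal) ^ 2 ∂μ)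
    (hF_upper : ∀ f : H,
      ∫⁻ ω, (‖⟪F ω, f⟫‖₊ : ENNReal) ^ 2 ∂μ ≤ ENNReal.ofReal (B * ‖f‖ ^ 2)) :
    ∃ F' : Ω → H,
      (∀ f : H, Measurable fun ω => ⟪F' ω, f⟫) ∧
      (∃ A' B' : ℝ, 0 < A' ∧
        (∀ f : H,
          ENNReal.ofReal (A' * ‖f‖ ^ 2) ≤ ∫⁻ ω, (‖⟪F' ω, f⟫‖₊ : ENNReal) ^ 2 ∂μ) ∧
        (∀ f : H,
          ∫⁻ ω, (‖⟪F' ω, f⟫‖₊ : ENNReal) ^ 2 ∂μ ≤ ENNReal.ofReal (B' * ‖f‖ ^ 2))) ∧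
      (∀ M : ℝ, 0 < M → 0 < μ {ω | M < ‖F' ω‖}) := by
  obtain ⟨F', A', B', hF', hF'_top⟩ := exists_norm_unbounded_continuous_frame_general one_ne_zero
    (memLp_one_iff_integrable.2 hb_int) (eLpNormEssSup_eq_top_iff.2 hb_unbdd)
    (⟨⟨hF_meas, hF_upper⟩, hA, hF_lower⟩ : IsContinuousFrame ℂ μ F A B)
  exact ⟨F', hF'.measurable_inner,
    ⟨A', B', hF'.lower_bound_pos, hF'.lower_bound, hF'.upper_bound⟩,
    fun M _ => eLpNormEssSup_eq_top_iff.1 hF'_top M⟩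
end

section
/- Let F and G be Bessel mappings for H with respect to (Ω, μ) and suppose that F is norm bounded by some L > 0 or G is norm bounded by some L > 0. Let m : Ω → ℂ be measurable, essentially bounded, and with support of finite measure, i.e., there exists a measurable K ⊆ Ω with μ(K) < ∞ such that m(ω) = 0 for μ-almost every ω ∈ Ω \ K. If M : H → H is a bounded operator satisfying ⟨M f, g⟩ = ∫_Ω m(ω)⟨f, F(ω)⟩⟨G(ω), g⟩ dμ(ω) for all f, g ∈ H, then M is a compact operator. -/
open MeasureTheory

local notation "⟪" x ", " y "⟫" => @inner ℂ _ _ x y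

/-! If `m • F` is square integrable, Cauchy–Schwarz and the Bessel bound of `G` give
`‖M f‖² ≤ B ∫ |m|² |⟨f, F⟩|²`. Summing over an orthonormal family and applying Bessel's inequality
pointwise under the integral bounds `∑ ‖M eᵢ‖²` by `B ∫ ‖m • F‖²`, so `M` is a Hilbert–Schmidt
operator, hence compact. If `m • G` is square integrable instead, the same applies to the adjoint
of `M`, which is the multiplier with symbol `conj m` and with `F` and `G` interchanged. Bounded
symbols supported on a set of finite measure make `m • F` square integrable as soon as `F` is
norm bounded. -/

section HilbertSchmidt

variable {𝕜 E E' : Type*} [RCLike 𝕜] [NormedAddCommGroup E] [InnerProductSpace 𝕜 E]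
  [NormedAddCommGroup E'] [InnerProductSpace 𝕜 E'] {T : E →L[𝕜] E'}

theorem isCompactOperator_of_small_on_orthogonal [CompleteSpace E']
    (h : ∀ ε : ℝ, 0 < ε → ∃ V : Submodule 𝕜 E, FiniteDimensional 𝕜 V ∧
      ∀ f ∈ Vᗮ, ‖T f‖ ≤ ε * ‖f‖) :
    IsCompactOperator T := by
  suffices T ∈ closure {S : E →L[𝕜] E' | IsCompactOperator S} by
    rwa [isClosed_setOfPred_isCompactOperator.closure_eq] at this
  refine Metric.mem_closure_iff.2 fun ε hε => ?_
  obtain ⟨V, _, hV⟩ := h (ε / 2) (half_pos hε)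
  have : ProperSpace V := FiniteDimensional.proper 𝕜 V
  have hproj : IsCompactOperator V.starProjection :=
    (isCompactOperator_of_locallyCompactSpace_dom V.orthogonalProjectionOnto).clm_comp V.subtypeL
  refine ⟨T ∘L V.starProjection, hproj.clm_comp T, ?_⟩
  have hdist : ‖T - T ∘L V.starProjection‖ ≤ ε / 2 := by
    refine ContinuousLinearMap.opNorm_le_bound _ (half_pos hε).le fun f => ?_
    calc ‖(T - T ∘L V.starProjection) f‖ = ‖T (Vᗮ.starProjection f)‖ := by
          simp [Submodule.starProjection_orthogonal]
      _ ≤ ε / 2 * ‖Vᗮ.starProjection f‖ := hV _ (Vᗮ.starProjection_apply_mem f)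
      _ ≤ ε / 2 * ‖f‖ := by gcongr; exact Vᗮ.norm_starProjection_apply_le f
  rw [dist_eq_norm]
  exact hdist.trans_lt (half_lt_self hε)

/-- Hilbert–Schmidt operators, encoded without choosing a Hilbert basis: the sums `∑ ‖T eᵢ‖²` are
bounded uniformly over all finite orthonormal families. -/
def IsHilbertSchmidt (T : E →L[𝕜] E') : Prop :=
  ∃ C : ℝ, ∀ (n : ℕ) (e : Fin n → E), Orthonormal 𝕜 e → ∑ i, ‖T (e i)‖ ^ 2 ≤ C

namespace IsHilbertSchmidt

-- Take a finite orthonormal family whose sum is within `ε²` of the supremum: appending a further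
-- unit vector `u` to it shows `‖T u‖² ≤ ε²`.
theorem exists_small_on_orthogonal (hT : IsHilbertSchmidt T) {ε : ℝ} (hε : 0 < ε) :
    ∃ V : Submodule 𝕜 E, FiniteDimensional 𝕜 V ∧ ∀ f ∈ Vᗮ, ‖T f‖ ≤ ε * ‖f‖ := by
  obtain ⟨C, hC⟩ := hT
  let A : Set ℝ := {x | ∃ (n : ℕ) (e : Fin n → E), Orthonormal 𝕜 e ∧ ∑ i, ‖T (e i)‖ ^ 2 = x}
  have hA_bdd : BddAbove A := ⟨C, by rintro _ ⟨n, e, he, rfl⟩; exact hC n e he⟩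
  have hA_ne : A.Nonempty := ⟨_, 0, ![], Orthonormal.of_isEmpty _, rfl⟩
  obtain ⟨_, ⟨n, e, he, rfl⟩, he_sup⟩ :=
    exists_lt_of_lt_csSup hA_ne (sub_lt_self (sSup A) (pow_pos hε 2))
  have hunit (u : E) (hu : ‖u‖ = 1) (hue : ∀ i, inner 𝕜 u (e i) = 0) : ‖T u‖ ≤ ε := by
    have hle : ∑ i, ‖T (Matrix.vecCons u e i)‖ ^ 2 ≤ sSup A :=
      le_csSup hA_bdd ⟨n + 1, _, orthonormal_vecCons_iff.2 ⟨hu, hue, he⟩, rfl⟩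
    simp only [Fin.sum_univ_succ, Matrix.cons_val_zero, Matrix.cons_val_succ] at hle
    exact le_of_sq_le_sq (by linarith) hε.le
  refine ⟨Submodule.span 𝕜 (Set.range e), .span_of_finite 𝕜 (Set.finite_range e), fun f hf => ?_⟩
  obtain rfl | hf₀ := eq_or_ne f 0
  · simp
  have hfe (i : Fin n) : inner 𝕜 f (e i) = 0 :=
    Submodule.inner_left_of_mem_orthogonal (Submodule.subset_span (Set.mem_range_self i)) hf
  have hTf := hunit ((‖f‖⁻¹ : 𝕜) • f) (norm_smul_inv_norm hf₀) fun i => by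
    rw [inner_smul_left, hfe i, mul_zero]
  rwa [map_smul, norm_smul, norm_inv, RCLike.norm_ofReal, abs_norm,
    inv_mul_le_iff₀ (norm_pos_iff.2 hf₀), mul_comm] at hTf

theorem isCompactOperator [CompleteSpace E'] (hT : IsHilbertSchmidt T) : IsCompactOperator T :=
  isCompactOperator_of_small_on_orthogonal fun _ hε => hT.exists_small_on_orthogonal hε

-- With `b` an orthonormal basis of the span of the vectors `T† eᵢ`, Parseval turns
-- `∑ᵢ ‖T† eᵢ‖²` into `∑ⱼ ∑ᵢ |⟨eᵢ, T bⱼ⟩|²`, which Bessel's inequality bounds by `∑ⱼ ‖T bⱼ‖²`.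
theorem adjoint [CompleteSpace E] [CompleteSpace E'] (hT : IsHilbertSchmidt T) :
    IsHilbertSchmidt (ContinuousLinearMap.adjoint T) := by
  obtain ⟨C, hC⟩ := hT
  refine ⟨C, fun n e he => ?_⟩
  let V : Submodule 𝕜 E := .span 𝕜 (Set.range fun i => ContinuousLinearMap.adjoint T (e i))
  have : FiniteDimensional 𝕜 V := .span_of_finite 𝕜 (Set.finite_range _)
  let b := stdOrthonormalBasis 𝕜 V
  have parseval (i : Fin n) :
      ‖ContinuousLinearMap.adjoint T (e i)‖ ^ 2 = ∑ j, ‖inner 𝕜 (e i) (T (b j))‖ ^ 2 := by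
    have hmem : ContinuousLinearMap.adjoint T (e i) ∈ V :=
      Submodule.subset_span (Set.mem_range_self i)
    have hsum := b.sum_sq_norm_inner_left ⟨_, hmem⟩
    simpa only [Submodule.coe_inner, ContinuousLinearMap.adjoint_inner_left, Submodule.coe_norm]
      using hsum.symm
  calc ∑ i, ‖ContinuousLinearMap.adjoint T (e i)‖ ^ 2
      = ∑ i, ∑ j, ‖inner 𝕜 (e i) (T (b j))‖ ^ 2 := Finset.sum_congr rfl fun i _ => parseval i
    _ = ∑ j, ∑ i, ‖inner 𝕜 (e i) (T (b j))‖ ^ 2 := Finset.sum_comm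
    _ ≤ ∑ j, ‖T (b j)‖ ^ 2 := Finset.sum_le_sum fun j _ => he.sum_inner_products_le _
    _ ≤ C := hC _ _ (b.orthonormal.comp_linearIsometry V.subtypeₗᵢ)

end IsHilbertSchmidt

end HilbertSchmidt

section Lintegral

variable {Ω : Type*} [MeasurableSpace Ω] {μ : Measure Ω}

theorem sq_lintegral_mul_le {f g : Ω → ENNReal} (hf : AEMeasurable f μ) (hg : AEMeasurable g μ) :
    (∫⁻ ω, f ω * g ω ∂μ) ^ 2 ≤ (∫⁻ ω, f ω ^ 2 ∂μ) * ∫⁻ ω, g ω ^ 2 ∂μ := by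
  have hsqrt (x : ENNReal) : (x ^ (1 / 2 : ℝ)) ^ 2 = x := by
    rw [← ENNReal.rpow_natCast, ← ENNReal.rpow_mul]; norm_num
  have holder := ENNReal.lintegral_mul_le_Lp_mul_Lq μ Real.HolderConjugate.two_two hf hg
  simp only [Pi.mul_apply, ENNReal.rpow_two] at holder
  calc (∫⁻ ω, f ω * g ω ∂μ) ^ 2
      ≤ ((∫⁻ ω, f ω ^ 2 ∂μ) ^ (1 / 2 : ℝ) * (∫⁻ ω, g ω ^ 2 ∂μ) ^ (1 / 2 : ℝ)) ^ 2 := by gcongr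
    _ = (∫⁻ ω, f ω ^ 2 ∂μ) * ∫⁻ ω, g ω ^ 2 ∂μ := by rw [mul_pow, hsqrt, hsqrt]

theorem lintegral_enorm_smul_sq_ne_top {𝕜 E : Type*} [NormedField 𝕜]
    [SeminormedAddCommGroup E] [NormedSpace 𝕜 E] {m : Ω → 𝕜} {F : Ω → E} {L : ℝ} {K : Set Ω}
    (hm : ∃ C : ℝ, ∀ᵐ ω ∂μ, ‖m ω‖ ≤ C) (hF : ∀ᵐ ω ∂μ, ‖F ω‖ ≤ L) (hK : μ K ≠ ⊤)
    (hm_supp : ∀ᵐ ω ∂μ, ω ∉ K → m ω = 0) :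
    ∫⁻ ω, ‖m ω • F ω‖ₑ ^ 2 ∂μ ≠ ⊤ := by
  obtain ⟨C, hC⟩ := hm
  let c : ENNReal := (ENNReal.ofReal C * ENNReal.ofReal L) ^ 2
  have hle : ∀ᵐ ω ∂μ, ‖m ω • F ω‖ₑ ^ 2 ≤ K.indicator (fun _ => c) ω := by
    filter_upwards [hC, hF, hm_supp] with ω hCω hFω hω
    by_cases hωK : ω ∈ K
    · rw [Set.indicator_of_mem hωK, enorm_smul, ← ofReal_norm, ← ofReal_norm]
      dsimp only [c]
      gcongr
    · rw [enorm_smul, hω hωK]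
      simp
  have hc : c ≠ ⊤ := by finiteness
  exact ne_top_of_le_ne_top (ENNReal.mul_ne_top hc hK)
    ((lintegral_mono_ae hle).trans (lintegral_indicator_const_le K c))

end Lintegral

section BesselMultiplier

variable {Ω 𝕜 E E' : Type*} [MeasurableSpace Ω] {μ : Measure Ω} [RCLike 𝕜]
  [NormedAddCommGroup E] [InnerProductSpace 𝕜 E]
  [NormedAddCommGroup E'] [InnerProductSpace 𝕜 E']

theorem sum_enorm_inner_sq_le_of_orthonormal {ι : Type*} [Fintype ι] {e : ι → E}
    (he : Orthonormal 𝕜 e) (x : E) : ∑ i, ‖inner 𝕜 x (e i)‖ₑ ^ 2 ≤ ‖x‖ₑ ^ 2 := by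
  have bessel := he.sum_inner_products_le x (s := Finset.univ)
  simp_rw [norm_inner_symm _ x] at bessel
  simp_rw [← ofReal_norm, ← ENNReal.ofReal_pow (norm_nonneg _)]
  rw [← ENNReal.ofReal_sum_of_nonneg fun i _ => sq_nonneg _]
  exact ENNReal.ofReal_le_ofReal bessel

variable (𝕜 μ) in
/-- `F` is a Bessel mapping with bound `B`: the continuous analogue of a Bessel sequence.
The functions `⟨f, F⟩` are only required to be measurable up to null sets. -/
structure IsBesselMapping (F : Ω → E) (B : ℝ) : Prop where
  aemeasurable_inner (f : E) : AEMeasurable (fun ω => inner 𝕜 (F ω) f) μ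
  lintegral_le (f : E) : ∫⁻ ω, ‖inner 𝕜 (F ω) f‖ₑ ^ 2 ∂μ ≤ ENNReal.ofReal (B * ‖f‖ ^ 2)

variable (μ) in
/-- `M` is the continuous Bessel multiplier with symbol `m`, analysis mapping `F` and synthesis
mapping `G`, i.e. `M f = ∫ m ⟨f, F⟩ G` in the weak sense. -/
def IsBesselMultiplier (m : Ω → 𝕜) (F : Ω → E) (G : Ω → E') (M : E →L[𝕜] E') : Prop :=
  ∀ f g, inner 𝕜 g (M f) = ∫ ω, m ω * inner 𝕜 (F ω) f * inner 𝕜 g (G ω) ∂μ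

namespace IsBesselMultiplier

variable {m : Ω → 𝕜} {F : Ω → E} {G : Ω → E'} {M : E →L[𝕜] E'} {B : ℝ}

theorem adjoint [CompleteSpace E] [CompleteSpace E'] (hM : IsBesselMultiplier μ m F G M) :
    IsBesselMultiplier μ (star m) G F (ContinuousLinearMap.adjoint M) := by
  intro f g
  rw [ContinuousLinearMap.adjoint_inner_right, ← inner_conj_symm, hM, ← integral_conj]
  refine integral_congr_ae (.of_forall fun ω => ?_)
  simp only [map_mul, inner_conj_symm, Pi.star_apply, RCLike.star_def]
  ring

theorem enorm_apply_sq_le (hM : IsBesselMultiplier μ m F G M) (hm : AEMeasurable m μ)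
    (hF : ∀ f, AEMeasurable (fun ω => inner 𝕜 (F ω) f) μ) (hG : IsBesselMapping 𝕜 μ G B) (f : E) :
    ‖M f‖ₑ ^ 2 ≤ (∫⁻ ω, ‖m ω * inner 𝕜 (F ω) f‖ₑ ^ 2 ∂μ) * ENNReal.ofReal B := by
  obtain hMf | hMf := eq_or_ne (M f) 0
  · simp [hMf]
  have hself : ‖M f‖ₑ ^ 2 ≤ ∫⁻ ω, ‖m ω * inner 𝕜 (F ω) f‖ₑ * ‖inner 𝕜 (G ω) (M f)‖ₑ ∂μ := by
    calc ‖M f‖ₑ ^ 2 = ‖inner 𝕜 (M f) (M f)‖ₑ := by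
          rw [inner_self_eq_norm_sq_to_K, enorm_pow, ← ofReal_norm (RCLike.ofReal _),
            RCLike.norm_ofReal, abs_norm, ofReal_norm]
      _ ≤ ∫⁻ ω, ‖m ω * inner 𝕜 (F ω) f * inner 𝕜 (M f) (G ω)‖ₑ ∂μ :=
          hM f (M f) ▸ enorm_integral_le_lintegral_enorm _
      _ = _ := by simp_rw [enorm_mul, ← ofReal_norm, norm_inner_symm (M f)]
  have hbessel : ∫⁻ ω, ‖inner 𝕜 (G ω) (M f)‖ₑ ^ 2 ∂μ ≤ ENNReal.ofReal B * ‖M f‖ₑ ^ 2 := by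
    simpa only [ENNReal.ofReal_mul' (sq_nonneg ‖M f‖), ENNReal.ofReal_pow (norm_nonneg (M f)),
      ofReal_norm] using hG.lintegral_le (M f)
  refine (ENNReal.mul_le_mul_iff_left (c := ‖M f‖ₑ ^ 2) (by simpa using hMf) (by finiteness)).1 ?_
  calc ‖M f‖ₑ ^ 2 * ‖M f‖ₑ ^ 2
      ≤ (∫⁻ ω, ‖m ω * inner 𝕜 (F ω) f‖ₑ * ‖inner 𝕜 (G ω) (M f)‖ₑ ∂μ) ^ 2 := by
        rw [← sq]; gcongr
    _ ≤ (∫⁻ ω, ‖m ω * inner 𝕜 (F ω) f‖ₑ ^ 2 ∂μ) * ∫⁻ ω, ‖inner 𝕜 (G ω) (M f)‖ₑ ^ 2 ∂μ :=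
        sq_lintegral_mul_le (hm.mul (hF f)).enorm (hG.aemeasurable_inner _).enorm
    _ ≤ (∫⁻ ω, ‖m ω * inner 𝕜 (F ω) f‖ₑ ^ 2 ∂μ) * ENNReal.ofReal B * ‖M f‖ₑ ^ 2 := by
        rw [mul_assoc]; gcongr

theorem isHilbertSchmidt (hM : IsBesselMultiplier μ m F G M) (hm : AEMeasurable m μ)
    (hF : ∀ f, AEMeasurable (fun ω => inner 𝕜 (F ω) f) μ) (hG : IsBesselMapping 𝕜 μ G B)
    (hmF : ∫⁻ ω, ‖m ω • F ω‖ₑ ^ 2 ∂μ ≠ ⊤) :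
    IsHilbertSchmidt M := by
  have hpointwise {n : ℕ} {e : Fin n → E} (he : Orthonormal 𝕜 e) (ω : Ω) :
      ∑ i, ‖m ω * inner 𝕜 (F ω) (e i)‖ₑ ^ 2 ≤ ‖m ω • F ω‖ₑ ^ 2 := by
    simp_rw [enorm_mul, enorm_smul, mul_pow, ← Finset.mul_sum]
    gcongr
    exact sum_enorm_inner_sq_le_of_orthonormal he (F ω)
  have hmeas (f : E) : AEMeasurable (fun ω => ‖m ω * inner 𝕜 (F ω) f‖ₑ ^ 2) μ :=
    (hm.mul (hF f)).enorm.pow_const 2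
  refine ⟨((∫⁻ ω, ‖m ω • F ω‖ₑ ^ 2 ∂μ) * ENNReal.ofReal B).toReal, fun n e he => ?_⟩
  rw [← ENNReal.ofReal_le_iff_le_toReal (by finiteness),
    ENNReal.ofReal_sum_of_nonneg fun i _ => sq_nonneg _]
  calc ∑ i, ENNReal.ofReal (‖M (e i)‖ ^ 2)
      ≤ ∑ i, (∫⁻ ω, ‖m ω * inner 𝕜 (F ω) (e i)‖ₑ ^ 2 ∂μ) * ENNReal.ofReal B := by
        gcongr with i
        rw [ENNReal.ofReal_pow (norm_nonneg _), ofReal_norm]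
        exact hM.enorm_apply_sq_le hm hF hG (e i)
    _ = (∫⁻ ω, ∑ i, ‖m ω * inner 𝕜 (F ω) (e i)‖ₑ ^ 2 ∂μ) * ENNReal.ofReal B := by
        rw [← Finset.sum_mul, ← lintegral_finsetSum' _ fun i _ => hmeas (e i)]
    _ ≤ (∫⁻ ω, ‖m ω • F ω‖ₑ ^ 2 ∂μ) * ENNReal.ofReal B := by
        gcongr with ω
        exact hpointwise he ω

end IsBesselMultiplier

-- `ω ↦ ‖m ω • F ω‖` need not be measurable; `∫⁻` is then a lower integral.
theorem multiplier_compact_of_finite_support_symbol_general [CompleteSpace E] [CompleteSpace E']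
    {m : Ω → 𝕜} {F : Ω → E} {G : Ω → E'} {B_F B_G : ℝ} {M : E →L[𝕜] E'}
    (hF : IsBesselMapping 𝕜 μ F B_F) (hG : IsBesselMapping 𝕜 μ G B_G) (hm : AEMeasurable m μ)
    (hmFG : ∫⁻ ω, ‖m ω • F ω‖ₑ ^ 2 ∂μ ≠ ⊤ ∨ ∫⁻ ω, ‖m ω • G ω‖ₑ ^ 2 ∂μ ≠ ⊤)
    (hM : IsBesselMultiplier μ m F G M) :
    IsHilbertSchmidt M := by
  obtain hmF | hmG := hmFG
  · exact hM.isHilbertSchmidt hm hF.aemeasurable_inner hG hmF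
  · have hm_star : AEMeasurable (star m) μ := continuous_star.measurable.comp_aemeasurable hm
    have hmG_star : ∫⁻ ω, ‖star m ω • G ω‖ₑ ^ 2 ∂μ ≠ ⊤ := by
      simpa only [enorm_smul, Pi.star_apply, RCLike.star_def, RCLike.enorm_conj] using hmG
    have hadj : IsHilbertSchmidt (ContinuousLinearMap.adjoint M) :=
      hM.adjoint.isHilbertSchmidt hm_star hG.aemeasurable_inner hF hmG_star
    simpa only [ContinuousLinearMap.adjoint_adjoint] using hadj.adjoint

end BesselMultiplier

/-- If `F, G` are Bessel mappings, one of which is (essentially) norm bounded, and `m` is an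
essentially bounded measurable symbol whose support has finite measure, then the continuous
Bessel multiplier `M_{m,F,G}` is a compact operator.
In Mathlib's convention the paper's `⟨x, y⟩` is `⟪y, x⟫`. -/
theorem multiplier_compact_of_finite_support_symbol
    {Ω : Type} [MeasurableSpace Ω] (μ : Measure Ω)
    {H : Type} [NormedAddCommGroup H] [InnerProductSpace ℂ H] [CompleteSpace H]
    (F G : Ω → H) (B_F B_G : ℝ) (hBF : 0 < B_F) (hBG : 0 < B_G)
    (hF_meas : ∀ f : H, Measurable fun ω => ⟪F ω, f⟫)
    (hF_bessel : ∀ f : H,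
      ∫⁻ ω, (‖⟪F ω, f⟫‖₊ : ENNReal) ^ 2 ∂μ ≤ ENNReal.ofReal (B_F * ‖f‖ ^ 2))
    (hG_meas : ∀ f : H, Measurable fun ω => ⟪G ω, f⟫)
    (hG_bessel : ∀ f : H,
      ∫⁻ ω, (‖⟪G ω, f⟫‖₊ : ENNReal) ^ 2 ∂μ ≤ ENNReal.ofReal (B_G * ‖f‖ ^ 2))
    (L : ℝ) (hL : 0 < L)
    (hbounded : (∀ᵐ ω ∂μ, ‖F ω‖ ≤ L) ∨ (∀ᵐ ω ∂μ, ‖G ω‖ ≤ L))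
    (m : Ω → ℂ) (hm_meas : Measurable m)
    (hm_bdd : ∃ C : ℝ, ∀ᵐ ω ∂μ, ‖m ω‖ ≤ C)
    (K : Set Ω) (hK : MeasurableSet K) (hK_fin : μ K < ⊤)
    (hm_supp : ∀ᵐ ω ∂μ, ω ∉ K → m ω = 0)
    (M : H →L[ℂ] H)
    (hM : ∀ f g : H, ⟪g, M f⟫ = ∫ ω, m ω * ⟪F ω, f⟫ * ⟪g, G ω⟫ ∂μ) :
    IsCompactOperator M := by
  have hmFG := hbounded.imp (lintegral_enorm_smul_sq_ne_top hm_bdd · hK_fin.ne hm_supp)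
    (lintegral_enorm_smul_sq_ne_top hm_bdd · hK_fin.ne hm_supp)
  exact (multiplier_compact_of_finite_support_symbol_general
    ⟨fun f => (hF_meas f).aemeasurable, hF_bessel⟩ ⟨fun f => (hG_meas f).aemeasurable, hG_bessel⟩
    hm_meas.aemeasurable hmFG hM).isCompactOperator
end
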